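/- Let C be a conjugation on the complex Hilbert space K, and let S be a closed densely defined normal operator in K with C(D(S)) = D(S) and C(S(Cξ)) = Sξ for all ξ ∈ D(S); let E be the spectral measure of S on 𝔖 = σ(S). Let F assign to each A ∈ Bor_E(𝔖) a self-adjoint idempotent F(A) ∈ B(K) such that C∘F(A)∘C = F(A), F(∅) = 0, F(𝔖) = I, F(A ∩ B) = F(A)F(B) for all A, B ∈ Bor_E(𝔖), and the set functions A ↦ ⟨F(A)ξ, η⟩ are countably additive on Bor_E(𝔖) for all ξ, η ∈ K. Suppose in addition that for every A ∈ Bor_E(𝔖): (a) S(F(A)K ∩ D(S)) ⊆ F(A)K, and (b) the restriction of S to F(A)K, viewed as an operator in the Hilbert space F(A)K with domain F(A)K ∩ D(S), has spectrum contained in the closure [A]. Then F(A) = E(A) for every A ∈ Bor_E(𝔖). -/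

import Mathlib

open MeasureTheory
open scoped InnerProductSpace ComplexConjugate ENNReal

/-- A conjugation on a complex Hilbert space `K`. -/
structure IsConjugation {K : Type*} [NormedAddCommGroup K] [InnerProductSpace ℂ K]
    (C : K → K) : Prop where
  map_add : ∀ x y : K, C (x + y) = C x + C y
  map_smul : ∀ (a : ℂ) (x : K), C (a • x) = (conj a) • C x
  invol : ∀ x : K, C (C x) = x
  inner_map : ∀ x y : K, ⟪C x, C y⟫_ℂ = conj ⟪x, y⟫_ℂ

/-- A (projection-valued) spectral measure on the Borel subsets of the set `𝔖 ⊆ ℂ`,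
together with the family `μ` of its associated diagonal scalar measures
`μ ξ (A) = ⟨E(A)ξ, ξ⟩`. -/
structure IsSpectralMeasure {K : Type*} [NormedAddCommGroup K] [InnerProductSpace ℂ K]
    [CompleteSpace K] (𝔖 : Set ℂ) (E : Set ℂ → K →L[ℂ] K) (μ : K → Measure ℂ) : Prop where
  selfAdjoint : ∀ A : Set ℂ, MeasurableSet A → A ⊆ 𝔖 → IsSelfAdjoint (E A)
  empty : E ∅ = 0
  univ : E 𝔖 = 1
  inter : ∀ A B : Set ℂ, MeasurableSet A → MeasurableSet B → A ⊆ 𝔖 → B ⊆ 𝔖 →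
    E (A ∩ B) = E A ∘L E B
  countablyAdditive : ∀ (ξ η : K) (A : ℕ → Set ℂ), (∀ n, MeasurableSet (A n)) →
    (∀ n, A n ⊆ 𝔖) → Pairwise (Function.onFun Disjoint A) →
    HasSum (fun n => ⟪η, E (A n) ξ⟫_ℂ) ⟪η, E (⋃ n, A n) ξ⟫_ℂ
  measure_eq : ∀ (ξ : K) (A : Set ℂ), MeasurableSet A → A ⊆ 𝔖 →
    μ ξ A = ENNReal.ofReal (⟪ξ, E A ξ⟫_ℂ).re
  measure_compl : ∀ ξ : K, μ ξ 𝔖ᶜ = 0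

/-- The polarized integral `∫_𝔖 f dμ_{ξ,η}` of `f` against the complex measure
`μ_{ξ,η}(A) = ⟨E(A)ξ, η⟩`, expressed through the four diagonal (positive) measures. -/
noncomputable def specInt {K : Type*} [NormedAddCommGroup K] [InnerProductSpace ℂ K]
    (μ : K → Measure ℂ) (f : ℂ → ℂ) (ξ η : K) : ℂ :=
  (4 : ℂ)⁻¹ * (((∫ z, f z ∂(μ (ξ + η))) - ∫ z, f z ∂(μ (ξ - η)))
    + Complex.I * ((∫ z, f z ∂(μ (ξ + Complex.I • η))) - ∫ z, f z ∂(μ (ξ - Complex.I • η))))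

/-- The image `A^c = {conj z : z ∈ A}` of a subset of `ℂ` under complex conjugation. -/
def conjSet (A : Set ℂ) : Set ℂ := (fun z => conj z) '' A

/-- The point `z₀` lies in the resolvent set of the (possibly unbounded) operator `S`:
`z₀ − S : D(S) → K` is bijective with bounded everywhere-defined inverse. -/
def HasBoundedResolventAt {K : Type*} [NormedAddCommGroup K] [InnerProductSpace ℂ K]
    (S : K →ₗ.[ℂ] K) (z₀ : ℂ) : Prop :=
  ∃ R : K →L[ℂ] K, (∀ ξ : K, ∃ h : R ξ ∈ S.domain, z₀ • R ξ - S ⟨R ξ, h⟩ = ξ) ∧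
    (∀ ξ : S.domain, R (z₀ • (ξ : K) - S ξ) = ξ)

/-- The spectrum of a (possibly unbounded) operator `S` in `K`. -/
def pmapSpectrum {K : Type*} [NormedAddCommGroup K] [InnerProductSpace ℂ K]
    (S : K →ₗ.[ℂ] K) : Set ℂ :=
  {z₀ | ¬ HasBoundedResolventAt S z₀}

/-- A closed densely defined normal operator: `D(S*) = D(S)` and `‖Sξ‖ = ‖S*ξ‖` on the
common domain (equivalently `SS* = S*S` with equality of domains). -/
def IsNormalPMap {K : Type*} [NormedAddCommGroup K] [InnerProductSpace ℂ K] [CompleteSpace K]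
    (S : K →ₗ.[ℂ] K) : Prop :=
  Dense (S.domain : Set K) ∧ S.IsClosed ∧ S.adjoint.domain = S.domain ∧
    ∀ (ξ : K) (h1 : ξ ∈ S.domain) (h2 : ξ ∈ S.adjoint.domain),
      ‖S ⟨ξ, h1⟩‖ = ‖S.adjoint ⟨ξ, h2⟩‖

/-- The natural domain `D_f = {ξ : ∫ |f|² dμ_{ξ,ξ} < ∞}` of the operator `Ψ(f)`. -/
def specDomain {K : Type*} [NormedAddCommGroup K] [InnerProductSpace ℂ K]
    (μ : K → MeasureTheory.Measure ℂ) (f : ℂ → ℂ) : Set K :=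
  {ξ | ∫⁻ z, (‖f z‖₊ : ENNReal) ^ 2 ∂(μ ξ) < ⊤}


/-- The collection `Bor_E(𝔖)` of Borel subsets `A ⊆ 𝔖` with `C ∘ E(A) ∘ C = E(A)`. -/
def borE {K : Type*} [NormedAddCommGroup K] [InnerProductSpace ℂ K] [CompleteSpace K]
    (C : K → K) (𝔖 : Set ℂ) (E : Set ℂ → K →L[ℂ] K) : Set (Set ℂ) :=
  {A | MeasurableSet A ∧ A ⊆ 𝔖 ∧ ∀ ξ : K, C (E A (C ξ)) = E A ξ}

/-
Let `P` be the spectral resolution `∫ z dP(z)` of `S`. If `B` lies in a disc of radius `r` about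
`z`, then `z - S` has numerical radius at most `r` on the range of `P B`, hence norm at most `2r`.
Two consequences of this estimate carry the proof.

*Uniqueness of resolutions.* If `P'` also resolves `S`, then `P A` and `P' B` intertwine operators
close to distinct scalars when `A` and `B` are small and far apart, so `P A * P' B = 0`; covering
by small discs yields `P' s ≤ P s` for closed `s`, and inner regularity yields `P = P'`. Since `S`
commutes with `C`, the conjugate family `A ↦ C P(conj A) C` resolves `S` too, hence equals `P`.

*Local spectral inclusion.* If `x = z f - S f`, the measure `μ_x` of the disc of radius `r` about
`z` is `o(r ^ 2)`. By Besicovitch differentiation against planar Lebesgue measure, `μ_x` vanishes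
on any set of `z` at which `x` is in the range of `z - S`. The spectral hypothesis on `F` makes
every `x` in the range of `F A` of this kind off the closure of `A`, so `F A ≤ P s` for every
closed `s ⊇ A`.

Inner regularity extends this domination beyond closed sets, provided enough subsets are
admissible for `F`. This holds for the conjugation-invariant Borel sets, which are pulled back
along `z ↦ re z + i |im z|`, and for the subsets of an `E`-null set. An arbitrary `A` in
`Bor_E(𝔖)` is a union of one set of each type, as `E (A \ conj A) = 0`. Hence `F A ≤ E A`, and
passing to complements gives equality.
-/

section Projections

variable {𝕜 K : Type*} [RCLike 𝕜] [NormedAddCommGroup K] [InnerProductSpace 𝕜 K]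
  [CompleteSpace K] {p q : K →L[𝕜] K}

lemma re_inner_starProjection_apply (hp : IsStarProjection p) (x : K) :
    RCLike.re ⟪x, p x⟫_𝕜 = ‖p x‖ ^ 2 := by
  have happly : p (p x) = p x := congr($(hp.isIdempotentElem.eq) x)
  rw [← inner_self_eq_norm_sq (𝕜 := 𝕜), hp.isSelfAdjoint.isSymmetric.apply_clm, happly]

lemma starProjection_le_iff_norm_apply_le (hp : IsStarProjection p) (hq : IsStarProjection q) :
    p ≤ q ↔ ∀ x, ‖p x‖ ≤ ‖q x‖ := by
  rw [ContinuousLinearMap.le_def, ContinuousLinearMap.isPositive_def',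
    and_iff_right (hq.isSelfAdjoint.sub hp.isSelfAdjoint)]
  refine forall_congr' fun x => ?_
  rw [ContinuousLinearMap.reApplyInnerSelf_apply, inner_re_symm, sub_apply,
    inner_sub_right, map_sub, re_inner_starProjection_apply hp, re_inner_starProjection_apply hq,
    sub_nonneg, sq_le_sq₀ (norm_nonneg _) (norm_nonneg _)]

end Projections

section ProjectionValuedMeasures

open Function (onFun)

variable {K : Type*} [NormedAddCommGroup K] [InnerProductSpace ℂ K] [CompleteSpace K]
  {X Y : Type*}

/-- Weakly countably additive families of orthogonal projections indexed by a collection `𝓑` of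
sets. Additivity is only required along sequences in `𝓑`, and neither multiplicativity nor a
normalization is imposed. -/
structure IsPVMOn (𝓑 : Set (Set X)) (P : Set X → K →L[ℂ] K) : Prop where
  isStarProjection : ∀ A ∈ 𝓑, IsStarProjection (P A)
  hasSum_inner : ∀ (ξ η : K) (A : ℕ → Set X), (∀ n, A n ∈ 𝓑) → Pairwise (onFun Disjoint A) →
    HasSum (fun n => ⟪η, P (A n) ξ⟫_ℂ) ⟪η, P (⋃ n, A n) ξ⟫_ℂ

/-- Projection-valued measures on a measurable space, without the normalization
`P Set.univ = 1`. -/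
abbrev IsPVM [MeasurableSpace X] (P : Set X → K →L[ℂ] K) : Prop :=
  IsPVMOn {A | MeasurableSet A} P

namespace IsPVMOn

variable {𝓑 : Set (Set X)} {P : Set X → K →L[ℂ] K} {A B : Set X}

lemma apply_empty (hP : IsPVMOn 𝓑 P) (h : ∅ ∈ 𝓑) : P ∅ = 0 := by
  ext ξ
  have hsum := (hP.hasSum_inner ξ (P ∅ ξ) (fun _ => ∅) (fun _ => h) fun _ _ _ => by simp).summable
  simpa using (summable_const_iff _).1 hsum

lemma apply_union (hP : IsPVMOn 𝓑 P) (h : ∅ ∈ 𝓑) (hA : A ∈ 𝓑) (hB : B ∈ 𝓑)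
    (hAB : Disjoint A B) : P (A ∪ B) = P A + P B := by
  let seq : ℕ → Set X := fun n => n.casesOn A fun m => m.casesOn B fun _ => ∅
  have hseq : ⋃ n, seq n = A ∪ B := by
    ext x
    simp only [Set.mem_iUnion, Set.mem_union]
    refine ⟨?_, fun hx => hx.elim (⟨0, ·⟩) (⟨1, ·⟩)⟩
    rintro ⟨_ | _ | n, hx⟩
    exacts [.inl hx, .inr hx, hx.elim]
  have hmem : ∀ n, seq n ∈ 𝓑
    | 0 => hA
    | 1 => hB
    | _ + 2 => h
  have hdisj : Pairwise (onFun Disjoint seq) := by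
    rintro (_ | _ | m) (_ | _ | n) hmn
    all_goals simp_all [onFun, seq, disjoint_comm]
  ext ξ
  refine ext_inner_left ℂ fun η => ?_
  have hsum := hP.hasSum_inner ξ η seq hmem hdisj
  rw [hseq] at hsum
  have hzero : ∀ n ∉ Finset.range 2, ⟪η, P (seq n) ξ⟫_ℂ = 0 := by
    rintro (_ | _ | n) hn
    · simp at hn
    · simp at hn
    · simp [seq, hP.apply_empty h]
  simpa [Finset.sum_range_succ, seq, inner_add_right] using
    hsum.unique (hasSum_sum_of_ne_finset_zero hzero)

lemma apply_add_apply_sdiff (hP : IsPVMOn 𝓑 P) (h : ∅ ∈ 𝓑) (hA : A ∈ 𝓑) (hBA : B \ A ∈ 𝓑)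
    (hAB : A ⊆ B) : P A + P (B \ A) = P B := by
  rw [← hP.apply_union h hA hBA Set.disjoint_sdiff_right, Set.union_sdiff_cancel hAB]

lemma mul_eq_zero (hP : IsPVMOn 𝓑 P) (h : ∅ ∈ 𝓑) (hA : A ∈ 𝓑) (hB : B ∈ 𝓑)
    (hunion : A ∪ B ∈ 𝓑) (hAB : Disjoint A B) : P A * P B = 0 := by
  have hpA := hP.isStarProjection A hA
  have hsum := hP.apply_union h hA hB hAB ▸ hP.isStarProjection _ hunion
  have hle : P A ≤ P A + P B := le_add_of_nonneg_right (hP.isStarProjection B hB).nonneg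
  simpa [mul_add, hpA.isIdempotentElem.eq] using (hpA.le_iff_mul_eq_left hsum).1 hle

lemma isPVM_inter_preimage [MeasurableSpace Y] (hP : IsPVMOn 𝓑 P) {M : Set X} {g : X → Y}
    (hM : ∀ s, MeasurableSet s → M ∩ g ⁻¹' s ∈ 𝓑) : IsPVM fun s => P (M ∩ g ⁻¹' s) where
  isStarProjection s hs := hP.isStarProjection _ (hM s hs)
  hasSum_inner ξ η s hs hd := by
    rw [Set.preimage_iUnion, Set.inter_iUnion]
    exact hP.hasSum_inner ξ η _ (fun n => hM _ (hs n)) fun i j hij =>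
      ((hd hij).preimage g).mono Set.inter_subset_right Set.inter_subset_right

end IsPVMOn

namespace IsPVM

variable [MeasurableSpace X] {P Q : Set X → K →L[ℂ] K} {A B : Set X}

lemma apply_union (hP : IsPVM P) (hA : MeasurableSet A) (hB : MeasurableSet B)
    (hAB : Disjoint A B) : P (A ∪ B) = P A + P B :=
  IsPVMOn.apply_union hP .empty hA hB hAB

lemma apply_add_apply_compl (hP : IsPVM P) (hA : MeasurableSet A) :
    P A + P Aᶜ = P Set.univ := by
  rw [← hP.apply_union hA hA.compl disjoint_compl_right, Set.union_compl_self]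

lemma apply_inter_add_apply_sdiff (hP : IsPVM P) (hA : MeasurableSet A) (hB : MeasurableSet B) :
    P (A ∩ B) + P (A \ B) = P A := by
  rw [← hP.apply_union (hA.inter hB) (hA.diff hB) Set.disjoint_sdiff_inter.symm,
    Set.inter_union_sdiff]

lemma apply_inter (hP : IsPVM P) (hA : MeasurableSet A) (hB : MeasurableSet B) :
    P (A ∩ B) = P A * P B := by
  have hmul_zero {s t : Set X} (hs : MeasurableSet s) (ht : MeasurableSet t)
      (hst : Disjoint s t) : P s * P t = 0 :=
    hP.mul_eq_zero .empty hs ht (hs.union ht) hst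
  rw [← hP.apply_inter_add_apply_sdiff hA hB, ← hP.apply_inter_add_apply_sdiff hB hA,
    Set.inter_comm B A, add_mul, mul_add, mul_add,
    (hP.isStarProjection _ (hA.inter hB)).isIdempotentElem.eq,
    hmul_zero (hA.inter hB) (hB.diff hA)
      (Set.disjoint_sdiff_right.mono_left Set.inter_subset_left),
    hmul_zero (hA.diff hB) (hA.inter hB) Set.disjoint_sdiff_inter,
    hmul_zero (hA.diff hB) (hB.diff hA) (Set.disjoint_sdiff_left.mono_right Set.sdiff_subset)]
  simp only [add_zero]

lemma commute (hP : IsPVM P) (hA : MeasurableSet A) (hB : MeasurableSet B) :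
    Commute (P A) (P B) := by
  rw [commute_iff_eq, ← hP.apply_inter hA hB, ← hP.apply_inter hB hA, Set.inter_comm]

lemma apply_eq_of_le (hP : IsPVM P) (hQ : IsPVM Q) (huniv : P Set.univ = Q Set.univ)
    (hle : ∀ s, MeasurableSet s → P s ≤ Q s) (hA : MeasurableSet A) : P A = Q A := by
  refine ((add_eq_add_iff_eq_and_eq (hle A hA) (hle Aᶜ hA.compl)).1 ?_).1
  rw [hP.apply_add_apply_compl hA, hQ.apply_add_apply_compl hA, huniv]

lemma enorm_sq_apply_iUnion (hP : IsPVM P) (ξ : K) {s : ℕ → Set X}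
    (hs : ∀ n, MeasurableSet (s n)) (hd : Pairwise (onFun Disjoint s)) :
    ‖P (⋃ n, s n) ξ‖ₑ ^ 2 = ∑' n, ‖P (s n) ξ‖ₑ ^ 2 := by
  have hsum := Complex.hasSum_re (hP.hasSum_inner ξ ξ s hs hd)
  have hnorm {t : Set X} (ht : MeasurableSet t) : (⟪ξ, P t ξ⟫_ℂ).re = ‖P t ξ‖ ^ 2 :=
    re_inner_starProjection_apply (hP.isStarProjection t ht) ξ
  simp only [hnorm (hs _), hnorm (MeasurableSet.iUnion hs)] at hsum
  simp only [← ofReal_norm, ← ENNReal.ofReal_pow (norm_nonneg _)]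
  rw [← hsum.tsum_eq, ENNReal.ofReal_tsum_of_nonneg (fun _ => by positivity) hsum.summable]

lemma map [MeasurableSpace Y] (hP : IsPVM P) {g : X → Y} (hg : Measurable g) :
    IsPVM fun s => P (g ⁻¹' s) := by
  have hM (s : Set Y) (hs : MeasurableSet s) : MeasurableSet (Set.univ ∩ g ⁻¹' s) :=
    .inter .univ (hg hs)
  simpa only [Set.univ_inter] using hP.isPVM_inter_preimage hM

/-- The diagonal measure `A ↦ ⟪ξ, P A ξ⟫ = ‖P A ξ‖ ^ 2` of a projection-valued measure at the
vector `ξ`. -/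
noncomputable def diagMeasure (hP : IsPVM P) (ξ : K) : Measure X :=
  Measure.ofMeasurable (fun s _ => ‖P s ξ‖ₑ ^ 2) (by simp [hP.apply_empty .empty])
    fun _ hs hd => hP.enorm_sq_apply_iUnion ξ hs hd

lemma diagMeasure_apply (hP : IsPVM P) (ξ : K) (hA : MeasurableSet A) :
    hP.diagMeasure ξ A = ‖P A ξ‖ₑ ^ 2 :=
  Measure.ofMeasurable_apply A hA

lemma diagMeasure_eq_zero_iff (hP : IsPVM P) {ξ : K} (hA : MeasurableSet A) :
    hP.diagMeasure ξ A = 0 ↔ P A ξ = 0 := by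
  simp [hP.diagMeasure_apply ξ hA]

instance (hP : IsPVM P) (ξ : K) : IsFiniteMeasure (hP.diagMeasure ξ) :=
  ⟨by simp [hP.diagMeasure_apply ξ .univ]⟩

lemma diagMeasure_smul (hP : IsPVM P) (c : ℂ) (ξ : K) :
    hP.diagMeasure (c • ξ) = ‖c‖ₑ ^ 2 • hP.diagMeasure ξ := by
  ext A hA
  simp [hP.diagMeasure_apply _ hA, enorm_smul, mul_pow]

lemma diagMeasure_apply_projection (hP : IsPVM P) (ξ : K) (hB : MeasurableSet B) :
    hP.diagMeasure (P B ξ) = (hP.diagMeasure ξ).restrict B := by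
  ext A hA
  rw [Measure.restrict_apply hA, hP.diagMeasure_apply _ hA, hP.diagMeasure_apply _ (hA.inter hB),
    hP.apply_inter hA hB]
  rfl

lemma apply_le_apply_iff_diagMeasure_le (hP : IsPVM P) (hQ : IsPVM Q) (hA : MeasurableSet A) :
    P A ≤ Q A ↔ ∀ ξ, hP.diagMeasure ξ A ≤ hQ.diagMeasure ξ A := by
  simp only [starProjection_le_iff_norm_apply_le (hP.isStarProjection A hA)
    (hQ.isStarProjection A hA), hP.diagMeasure_apply _ hA, hQ.diagMeasure_apply _ hA,
    ENNReal.pow_le_pow_left_iff two_ne_zero, enorm_le_iff_norm_le]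

lemma apply_eq_self_of_apply_compl_eq_zero (hP : IsPVM P) (huniv : P Set.univ = 1) {ξ : K}
    (hA : MeasurableSet A) (h : P Aᶜ ξ = 0) : P A ξ = ξ := by
  simpa [huniv, h] using congr($(hP.apply_add_apply_compl hA) ξ)

lemma apply_eq_zero_of_locally [TopologicalSpace X] [SecondCountableTopology X] (hP : IsPVM P)
    {ξ : K} (hA : MeasurableSet A)
    (h : ∀ z ∈ A, ∃ t ∈ nhds z, MeasurableSet t ∧ P t ξ = 0) : P A ξ = 0 := by
  rw [← hP.diagMeasure_eq_zero_iff hA]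
  refine measure_null_of_locally_null A fun z hz => ?_
  obtain ⟨t, ht, htm, h0⟩ := h z hz
  exact ⟨t, mem_nhdsWithin_of_mem_nhds ht, (hP.diagMeasure_eq_zero_iff htm).2 h0⟩

lemma apply_le_of_forall_isClosed [TopologicalSpace X] [TopologicalSpace.PseudoMetrizableSpace X]
    [BorelSpace X] (hP : IsPVM P) (hQ : IsPVM Q) (hle : ∀ s, IsClosed s → P s ≤ Q s)
    (hA : MeasurableSet A) : P A ≤ Q A := by
  rw [hP.apply_le_apply_iff_diagMeasure_le hQ hA]
  intro ξ
  rw [hA.measure_eq_iSup_isClosed_of_ne_top (measure_ne_top _ _)]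
  refine iSup₂_le fun s hsA => iSup_le fun hs => ?_
  exact ((hP.apply_le_apply_iff_diagMeasure_le hQ hs.measurableSet).1 (hle s hs) ξ).trans
    (measure_mono hsA)

end IsPVM

end ProjectionValuedMeasures

section NumericalRadius

variable {K : Type*} [NormedAddCommGroup K] [InnerProductSpace ℂ K]

lemma norm_inner_map_le_of_norm_inner_map_self_le {T : K →ₗ[ℂ] K} {r : ℝ}
    (hT : ∀ x, ‖⟪T x, x⟫_ℂ‖ ≤ r * ‖x‖ ^ 2) (x y : K) :
    ‖⟪T y, x⟫_ℂ‖ ≤ r * (‖x‖ ^ 2 + ‖y‖ ^ 2) := by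
  have hpar := parallelogram_law_with_norm ℂ x y
  have hparI := parallelogram_law_with_norm ℂ x (Complex.I • y)
  rw [norm_smul, Complex.norm_I, one_mul] at hparI
  rw [inner_map_polarization, norm_div, RCLike.norm_ofNat, div_le_iff₀ (by norm_num)]
  calc _ ≤ ‖⟪T (x + y), x + y⟫_ℂ‖ + ‖⟪T (x - y), x - y⟫_ℂ‖
        + ‖Complex.I * ⟪T (x + Complex.I • y), x + Complex.I • y⟫_ℂ‖
        + ‖Complex.I * ⟪T (x - Complex.I • y), x - Complex.I • y⟫_ℂ‖ :=
        (norm_sub_le _ _).trans (by gcongr; exact norm_add_le_of_le (norm_sub_le _ _) le_rfl)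
    _ ≤ r * ‖x + y‖ ^ 2 + r * ‖x - y‖ ^ 2 + r * ‖x + Complex.I • y‖ ^ 2
        + r * ‖x - Complex.I • y‖ ^ 2 := by
        simp only [norm_mul, Complex.norm_I, one_mul]
        gcongr <;> exact hT _
    _ = r * (‖x‖ ^ 2 + ‖y‖ ^ 2) * 4 := by
        linear_combination r * hpar + r * hparI

lemma norm_map_le_two_mul_of_norm_inner_map_self_le {T : K →ₗ[ℂ] K} {r : ℝ}
    (hT : ∀ x, ‖⟪T x, x⟫_ℂ‖ ≤ r * ‖x‖ ^ 2) (y : K) : ‖T y‖ ≤ 2 * r * ‖y‖ := by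
  rcases eq_or_ne y 0 with rfl | hy
  · simp
  rcases eq_or_ne (T y) 0 with hTy | hTy
  · have hr : 0 ≤ r * ‖y‖ ^ 2 := (norm_nonneg _).trans (hT y)
    have hr : 0 ≤ r := nonneg_of_mul_nonneg_left hr (by positivity)
    rw [hTy, norm_zero]
    positivity
  have hpos : 0 < ‖T y‖ ^ 2 * ‖y‖ := by positivity
  -- the two vectors have equal norms, which optimizes the bound
  have h := norm_inner_map_le_of_norm_inner_map_self_le hT ((‖y‖ : ℂ) • T y) ((‖T y‖ : ℂ) • y)
  simp only [map_smul, inner_smul_left, inner_smul_right, norm_mul, inner_self_eq_norm_sq_to_K,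
    norm_smul, Complex.conj_ofReal, norm_pow, Complex.norm_real, norm_norm,
    Complex.coe_algebraMap] at h
  refine le_of_mul_le_mul_left ?_ hpos
  linarith

end NumericalRadius

section SpectralResolutions

variable {K : Type*} [NormedAddCommGroup K] [InnerProductSpace ℂ K] [CompleteSpace K]

lemma IsPVM.specInt_diagMeasure_self {P : Set ℂ → K →L[ℂ] K} (hP : IsPVM P) (f : ℂ → ℂ) (ξ : K) :
    specInt hP.diagMeasure f ξ ξ = ∫ z, f z ∂hP.diagMeasure ξ := by
  have hsmul (c : ℂ) : ∫ z, f z ∂hP.diagMeasure (c • ξ) =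
      ((‖c‖ ^ 2 : ℝ) : ℂ) * ∫ z, f z ∂hP.diagMeasure ξ := by
    rw [hP.diagMeasure_smul, integral_smul_measure, Complex.real_smul]
    simp
  have hadd : ξ + Complex.I • ξ = (1 + Complex.I) • ξ := by rw [add_smul, one_smul]
  have hsub : ξ - Complex.I • ξ = (1 - Complex.I) • ξ := by rw [sub_smul, one_smul]
  have hnorm : ‖1 + Complex.I‖ = ‖1 - Complex.I‖ := by
    rw [← Complex.norm_conj (1 - Complex.I)]
    simp
  have hzero : ∫ z, f z ∂hP.diagMeasure 0 = 0 := by simpa using hsmul 0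
  rw [specInt, ← two_smul ℂ ξ, hadd, hsub, sub_self, hsmul, hsmul, hsmul, hzero, hnorm]
  norm_num
  ring

/-- `P` is a spectral resolution of the operator `S`: a normalized projection-valued measure on `ℂ`
such that `S = ∫ z dP(z)`, including equality of domains. -/
structure IsSpectralResolution (S : K →ₗ.[ℂ] K) (P : Set ℂ → K →L[ℂ] K) : Prop where
  isPVM : IsPVM P
  univ : P Set.univ = 1
  mem_domain_iff : ∀ ξ, ξ ∈ S.domain ↔ ξ ∈ specDomain isPVM.diagMeasure fun z => z
  inner_apply : ∀ ξ η : S.domain,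
    ⟪(η : K), S ξ⟫_ℂ = specInt isPVM.diagMeasure (fun z => z) ξ η

namespace IsSpectralResolution

variable {S : K →ₗ.[ℂ] K} {P : Set ℂ → K →L[ℂ] K} {B : Set ℂ}

lemma apply_mem_domain_of_isBounded (h : IsSpectralResolution S P) (hB : MeasurableSet B)
    (hbdd : Bornology.IsBounded B) (x : K) : P B x ∈ S.domain := by
  obtain ⟨r, hr⟩ := hbdd.subset_closedBall 0
  rw [h.mem_domain_iff, specDomain, Set.mem_ofPred_eq, h.isPVM.diagMeasure_apply_projection x hB]
  calc ∫⁻ z in B, (‖z‖₊ : ℝ≥0∞) ^ 2 ∂h.isPVM.diagMeasure x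
      ≤ ∫⁻ _ in B, ENNReal.ofReal r ^ 2 ∂h.isPVM.diagMeasure x := by
        refine setLIntegral_mono' hB fun z hz => ?_
        gcongr
        rw [← enorm_eq_nnnorm, ← ofReal_norm]
        exact ENNReal.ofReal_le_ofReal (by simpa using hr hz)
    _ < ⊤ := by
        rw [setLIntegral_const]
        exact ENNReal.mul_lt_top (by finiteness) (measure_lt_top _ _)

lemma dense_domain (h : IsSpectralResolution S P) : Dense (S.domain : Set K) := by
  rw [Submodule.dense_iff_topologicalClosure_eq_top, Submodule.topologicalClosure_eq_top_iff,
    eq_bot_iff]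
  intro y hy
  suffices P Set.univ y = 0 by simpa [h.univ] using this
  refine h.isPVM.apply_eq_zero_of_locally .univ fun z _ =>
    ⟨Metric.ball z 1, Metric.ball_mem_nhds z one_pos, measurableSet_ball, ?_⟩
  have hball : MeasurableSet (Metric.ball z 1) := measurableSet_ball
  have hmem := h.apply_mem_domain_of_isBounded hball Metric.isBounded_ball y
  have hre := re_inner_starProjection_apply (h.isPVM.isStarProjection _ hball) y
  rw [Submodule.inner_left_of_mem_orthogonal hmem hy] at hre
  simpa using hre.symm

lemma diagMeasure_unitary_apply (h : IsSpectralResolution S P) {U : K →L[ℂ] K}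
    (hU : U ∈ unitary (K →L[ℂ] K)) (hcomm : ∀ A, MeasurableSet A → Commute U (P A)) (x : K) :
    h.isPVM.diagMeasure (U x) = h.isPVM.diagMeasure x := by
  ext A hA
  have hx : P A (U x) = U (P A x) := congr($((hcomm A hA).eq.symm) x)
  rw [h.isPVM.diagMeasure_apply _ hA, h.isPVM.diagMeasure_apply _ hA, hx, enorm_eq_nnnorm,
    enorm_eq_nnnorm, ← nnnorm_norm, ContinuousLinearMap.norm_map_of_mem_unitary hU, nnnorm_norm]

lemma unitary_apply_mem_domain (h : IsSpectralResolution S P) {U : K →L[ℂ] K}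
    (hU : U ∈ unitary (K →L[ℂ] K)) (hcomm : ∀ A, MeasurableSet A → Commute U (P A)) {x : K}
    (hx : x ∈ S.domain) : U x ∈ S.domain := by
  rw [h.mem_domain_iff, specDomain, Set.mem_ofPred_eq] at hx ⊢
  rwa [h.diagMeasure_unitary_apply hU hcomm]

lemma apply_unitary_apply (h : IsSpectralResolution S P) {U : K →L[ℂ] K}
    (hU : U ∈ unitary (K →L[ℂ] K)) (hcomm : ∀ A, MeasurableSet A → Commute U (P A))
    (x : S.domain) : S ⟨U x, h.unitary_apply_mem_domain hU hcomm x.2⟩ = U (S x) := by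
  rw [← sub_eq_zero]
  refine h.dense_domain.eq_zero_of_inner_right ℂ fun v hv => ?_
  have hcomm_star (A : Set ℂ) (hA : MeasurableSet A) : Commute (star U) (P A) := by
    simpa [(h.isPVM.isStarProjection A hA).isSelfAdjoint.star_eq] using (hcomm A hA).star_star
  let w : S.domain := ⟨star U v, h.unitary_apply_mem_domain (Unitary.star_mem hU) hcomm_star hv⟩
  have hw : U w = v := congr($(Unitary.mul_star_self_of_mem hU) v)
  have hw_mem : U w ∈ S.domain := hw ▸ hv
  have hform : ⟪U w, S ⟨U x, h.unitary_apply_mem_domain hU hcomm x.2⟩⟫_ℂ = ⟪(w : K), S x⟫_ℂ := by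
    have hdiag := h.diagMeasure_unitary_apply hU hcomm
    rw [h.inner_apply _ ⟨U w, hw_mem⟩, h.inner_apply x w]
    simp only [specInt, ← map_smul U, ← map_add U, ← map_sub U, hdiag]
  rw [inner_sub_right, sub_eq_zero, ← hw, hform,
    ContinuousLinearMap.inner_map_map_of_mem_unitary hU]

lemma projection_apply_mem_domain (h : IsSpectralResolution S P) (hB : MeasurableSet B) {x : K}
    (hx : x ∈ S.domain) : P B x ∈ S.domain := by
  rw [h.mem_domain_iff, specDomain, Set.mem_ofPred_eq] at hx ⊢
  rw [h.isPVM.diagMeasure_apply_projection x hB]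
  exact (lintegral_mono' Measure.restrict_le_self le_rfl).trans_lt hx

lemma apply_projection_apply (h : IsSpectralResolution S P) (hB : MeasurableSet B)
    (x : S.domain) : S ⟨P B x, h.projection_apply_mem_domain hB x.2⟩ = P B (S x) := by
  have hU := (h.isPVM.isStarProjection B hB).two_mul_sub_one_mem_unitary
  have hcomm (A : Set ℂ) (hA : MeasurableSet A) : Commute (2 * P B - 1) (P A) :=
    ((Commute.ofNat_left _ _).mul_left (h.isPVM.commute hB hA)).sub_left (Commute.one_left _)
  let p : S.domain := ⟨P B x, h.projection_apply_mem_domain hB x.2⟩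
  have happly (v : K) : (2 * P B - 1) v = (2 : ℂ) • P B v - v := by
    simp [two_mul, two_smul]
  have hS : S ((2 : ℂ) • p - x) = (2 : ℂ) • P B (S x) - S x := by
    rw [← happly (S x), ← h.apply_unitary_apply hU hcomm x]
    exact congrArg S (Subtype.ext (happly x).symm)
  rw [S.map_sub, S.map_smul, sub_left_inj] at hS
  exact smul_right_injective K two_ne_zero hS

lemma norm_inner_smul_sub_apply_le (h : IsSpectralResolution S P) {z : ℂ} {r : ℝ} {x : S.domain}
    (hx : ∀ᵐ w ∂h.isPVM.diagMeasure x, ‖z - w‖ ≤ r) :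
    ‖⟪(x : K), z • (x : K) - S x⟫_ℂ‖ ≤ r * ‖(x : K)‖ ^ 2 := by
  have hmass : (h.isPVM.diagMeasure x).real Set.univ = ‖(x : K)‖ ^ 2 := by
    simp [Measure.real, h.isPVM.diagMeasure_apply _ .univ, h.univ]
  have hint : Integrable (fun w : ℂ => w) (h.isPVM.diagMeasure x) := by
    refine .of_bound (by fun_prop) (r + ‖z‖) ?_
    filter_upwards [hx] with w hw
    exact (norm_le_norm_sub_add w z).trans (by rw [norm_sub_rev]; gcongr)
  have hinner : ⟪(x : K), z • (x : K) - S x⟫_ℂ = ∫ w, (z - w) ∂h.isPVM.diagMeasure x := by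
    rw [inner_sub_right, inner_smul_right, h.inner_apply, h.isPVM.specInt_diagMeasure_self,
      integral_sub (integrable_const _) hint, integral_const, hmass, inner_self_eq_norm_sq_to_K,
      Complex.real_smul, mul_comm]
    simp
  rw [hinner, ← hmass]
  exact norm_integral_le_of_norm_le_const hx

lemma norm_apply_smul_sub_le (h : IsSpectralResolution S P) (hB : MeasurableSet B) {z : ℂ} {r : ℝ}
    (hr : 0 ≤ r) (hBr : B ⊆ Metric.closedBall z r) (f : S.domain) :
    ‖P B (z • (f : K) - S f)‖ ≤ 2 * r * ‖P B f‖ := by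
  have hproj := h.isPVM.isStarProjection B hB
  have hidem (x : K) : P B (P B x) = P B x := congr($(hproj.isIdempotentElem.eq) x)
  have hdom := h.apply_mem_domain_of_isBounded hB (Metric.isBounded_closedBall.subset hBr)
  let PB : K →ₗ[ℂ] S.domain := (P B).toLinearMap.codRestrict S.domain hdom
  let T : K →ₗ[ℂ] K := z • (P B).toLinearMap - S.toFun ∘ₗ PB
  have hT_proj (g : S.domain) : T g = P B (z • (g : K) - S g) := by
    rw [map_sub, map_smul, ← h.apply_projection_apply hB g]
    rfl
  have hT_idem (x : K) : T (P B x) = T x := by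
    have hPB : PB (P B x) = PB x := Subtype.ext (hidem x)
    change z • P B (P B x) - S (PB (P B x)) = z • P B x - S (PB x)
    rw [hPB, hidem]
  have hT (x : K) : ‖⟪T x, x⟫_ℂ‖ ≤ r * ‖x‖ ^ 2 := by
    have hfix : P B (T x) = T x := by
      rw [← hT_idem x]
      exact congr(P B $(hT_proj (PB x))).trans ((hidem _).trans (hT_proj (PB x)).symm)
    have hinner : ⟪T x, x⟫_ℂ = ⟪T x, P B x⟫_ℂ := by
      rw [← hproj.isSelfAdjoint.isSymmetric.apply_clm, hfix]
    have hae : ∀ᵐ w ∂h.isPVM.diagMeasure (P B x), ‖z - w‖ ≤ r := by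
      rw [h.isPVM.diagMeasure_apply_projection x hB]
      filter_upwards [ae_restrict_mem hB] with w hw
      exact mem_closedBall_iff_norm'.1 (hBr hw)
    rw [hinner, norm_inner_symm]
    refine (h.norm_inner_smul_sub_apply_le (x := PB x) hae).trans ?_
    gcongr
    exact (P B).le_of_opNorm_le (IsStarProjection.norm_le _ hproj) x |>.trans_eq (one_mul _)
  rw [← hT_proj, ← hT_idem]
  exact norm_map_le_two_mul_of_norm_inner_map_self_le hT _

end IsSpectralResolution

end SpectralResolutions

section LocalSpectralInclusion

open Filter Topology

variable {K : Type*} [NormedAddCommGroup K] [InnerProductSpace ℂ K] [CompleteSpace K]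

lemma measure_eq_zero_of_tendsto_closedBall_div {X : Type*} [MetricSpace X]
    [SecondCountableTopology X] [MeasurableSpace X] [BorelSpace X] [HasBesicovitchCovering X]
    (ρ μ : Measure X) [IsLocallyFiniteMeasure ρ] [ρ.IsOpenPosMeasure] [SigmaFinite ρ]
    [IsFiniteMeasure μ] {t : Set X} (ht : ∀ z ∈ t, Tendsto (fun r => μ (Metric.closedBall z r) /
      ρ (Metric.closedBall z r)) (𝓝[>] 0) (𝓝 0)) : μ t = 0 := by
  rw [measure_eq_zero_iff_ae_notMem]
  filter_upwards [Besicovitch.ae_tendsto_rnDeriv ρ μ, ρ.rnDeriv_lt_top μ] with z hlim hfin hz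
  refine hfin.ne (tendsto_nhds_unique hlim ?_)
  rw [← ENNReal.inv_zero]
  refine (tendsto_inv_iff.2 (ht z hz)).congr' ?_
  filter_upwards [self_mem_nhdsWithin] with r hr
  exact ENNReal.inv_div (.inr (measure_ne_top _ _))
    (.inl (Metric.measure_closedBall_pos ρ z hr).ne')

lemma tendsto_measure_closedBall_sdiff_singleton {X : Type*} [MetricSpace X] [MeasurableSpace X]
    [OpensMeasurableSpace X] (μ : Measure X) [IsFiniteMeasure μ] (z : X) :
    Tendsto (fun r => μ (Metric.closedBall z r \ {z})) (𝓝[>] 0) (𝓝 0) := by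
  have hempty : ⋂ r > (0 : ℝ), Metric.closedBall z r \ {z} = ∅ := by
    refine Set.eq_empty_of_forall_notMem fun w hw => ?_
    simp only [Set.mem_iInter] at hw
    have hwz : w = z :=
      dist_le_zero.1 (le_of_forall_pos_le_add fun r hr => by simpa using (hw r hr).1)
    exact (hw 1 one_pos).2 hwz
  rw [← measure_empty (μ := μ), ← hempty]
  exact tendsto_measure_biInter_gt
    (fun r _ => (measurableSet_closedBall.diff (measurableSet_singleton z)).nullMeasurableSet)
    (fun i j _ hij => Set.sdiff_subset_sdiff_left (Metric.closedBall_subset_closedBall hij))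
    ⟨1, one_pos, measure_ne_top _ _⟩

namespace IsSpectralResolution

variable {S : K →ₗ.[ℂ] K} {P : Set ℂ → K →L[ℂ] K}

lemma diagMeasure_closedBall_le (h : IsSpectralResolution S P) (z : ℂ) (f : S.domain) {r : ℝ}
    (hr : 0 ≤ r) :
    h.isPVM.diagMeasure (z • (f : K) - S f) (Metric.closedBall z r) ≤
      4 * h.isPVM.diagMeasure f (Metric.closedBall z r \ {z}) * volume (Metric.closedBall z r) := by
  have hz : MeasurableSet ({z} : Set ℂ) := measurableSet_singleton z
  have hball : MeasurableSet (Metric.closedBall z r \ {z}) := measurableSet_closedBall.diff hz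
  have hatom : h.isPVM.diagMeasure (z • (f : K) - S f) {z} = 0 := by
    rw [h.isPVM.diagMeasure_eq_zero_iff hz, ← norm_le_zero_iff]
    simpa using h.norm_apply_smul_sub_le hz le_rfl (by simp) f
  have hnorm := h.norm_apply_smul_sub_le hball hr Set.sdiff_subset f
  have hpi : (1 : ℝ≥0∞) ≤ NNReal.pi := by
    exact_mod_cast (one_le_two.trans Real.two_le_pi : (1 : ℝ) ≤ NNReal.pi)
  rw [← measure_sdiff_null hatom, h.isPVM.diagMeasure_apply _ hball,
    h.isPVM.diagMeasure_apply _ hball, Complex.volume_closedBall]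
  set P₀ := P (Metric.closedBall z r \ {z})
  have henorm : ‖P₀ (z • (f : K) - S f)‖ₑ ≤ 2 * ENNReal.ofReal r * ‖P₀ f‖ₑ := by
    simp only [← ofReal_norm]
    rw [← ENNReal.ofReal_ofNat, ← ENNReal.ofReal_mul (by simp),
      ← ENNReal.ofReal_mul (by positivity)]
    exact ENNReal.ofReal_le_ofReal hnorm
  calc ‖P₀ (z • (f : K) - S f)‖ₑ ^ 2 ≤ (2 * ENNReal.ofReal r * ‖P₀ f‖ₑ) ^ 2 := by gcongr
    _ = 4 * ‖P₀ f‖ₑ ^ 2 * (ENNReal.ofReal r ^ 2 * 1) := by ring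
    _ ≤ 4 * ‖P₀ f‖ₑ ^ 2 * (ENNReal.ofReal r ^ 2 * NNReal.pi) := by gcongr

lemma apply_eq_self_of_local_solvability (h : IsSpectralResolution S P) {s : Set ℂ}
    (hs : IsClosed s) {x : K} (hx : ∀ z ∉ s, ∃ f : S.domain, z • (f : K) - S f = x) :
    P s x = x := by
  refine h.isPVM.apply_eq_self_of_apply_compl_eq_zero h.univ hs.measurableSet ?_
  rw [← h.isPVM.diagMeasure_eq_zero_iff hs.measurableSet.compl]
  refine measure_eq_zero_of_tendsto_closedBall_div volume _ fun z hz => ?_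
  obtain ⟨f, rfl⟩ := hx z hz
  have hlim := ENNReal.Tendsto.const_mul (a := 4)
    (tendsto_measure_closedBall_sdiff_singleton (h.isPVM.diagMeasure f) z) (.inr (by simp))
  rw [mul_zero] at hlim
  refine tendsto_of_tendsto_of_tendsto_of_le_of_le' tendsto_const_nhds hlim
    (.of_forall fun _ => zero_le) ?_
  filter_upwards [self_mem_nhdsWithin] with r hr
  exact ENNReal.div_le_of_le_mul (h.diagMeasure_closedBall_le z f (le_of_lt hr))

end IsSpectralResolution

end LocalSpectralInclusion

section Uniqueness

variable {K : Type*} [NormedAddCommGroup K] [InnerProductSpace ℂ K] [CompleteSpace K]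

namespace IsSpectralResolution

variable {S : K →ₗ.[ℂ] K} {P P' : Set ℂ → K →L[ℂ] K} {A B : Set ℂ}

lemma mul_eq_zero_of_lt_dist (h : IsSpectralResolution S P) (h' : IsSpectralResolution S P')
    (hA : MeasurableSet A) (hB : MeasurableSet B) {a b : ℂ} {r : ℝ} (hr : 0 ≤ r)
    (hAr : A ⊆ Metric.closedBall a r) (hBr : B ⊆ Metric.closedBall b r)
    (hdist : 4 * r < dist a b) : P A * P' B = 0 := by
  have hd : 0 < dist a b := by linarith
  suffices ‖P A * P' B‖ ≤ 4 * r / dist a b * ‖P A * P' B‖ by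
    have hlt : 4 * r / dist a b < 1 := (div_lt_one hd).2 hdist
    exact norm_le_zero_iff.1 (by nlinarith [norm_nonneg (P A * P' B)])
  have hproj := h'.isPVM.isStarProjection B hB
  have hidem (x : K) : P' B (P' B x) = P' B x := congr($(hproj.isIdempotentElem.eq) x)
  refine ContinuousLinearMap.opNorm_le_bound _ (by positivity) fun y => ?_
  let p : S.domain :=
    ⟨P' B y, h'.apply_mem_domain_of_isBounded hB (Metric.isBounded_closedBall.subset hBr) y⟩
  have hSp : S p = P' B (S p) := by
    rw [← h'.apply_projection_apply hB p]
    exact congrArg S (Subtype.ext (hidem y).symm)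
  have hbp : P' B (b • (p : K) - S p) = b • (p : K) - S p := by
    rw [map_sub, map_smul, hidem y, ← hSp]
  have hleft : ‖P A (a • (p : K) - S p)‖ ≤ 2 * r * (‖P A * P' B‖ * ‖y‖) :=
    (h.norm_apply_smul_sub_le hA hr hAr p).trans (by gcongr; exact (P A * P' B).le_opNorm y)
  have hright : ‖P A (b • (p : K) - S p)‖ ≤ ‖P A * P' B‖ * (2 * r * ‖y‖) := by
    rw [← hbp]
    refine ((P A * P' B).le_opNorm _).trans ?_
    gcongr
    rw [← hbp]
    refine (h'.norm_apply_smul_sub_le hB hr hBr p).trans ?_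
    gcongr
    rw [hidem y]
    exact (P' B).le_of_opNorm_le (IsStarProjection.norm_le _ hproj) y |>.trans_eq (one_mul _)
  have hcomb : (a - b) • (P A * P' B) y =
      P A (a • (p : K) - S p) - P A (b • (p : K) - S p) := by
    rw [← map_sub, sub_sub_sub_cancel_right, ← sub_smul, map_smul]
    rfl
  rw [div_mul_eq_mul_div, div_mul_eq_mul_div, le_div_iff₀' hd, dist_eq_norm, ← norm_smul, hcomb]
  refine (norm_sub_le_of_le hleft hright).trans_eq ?_
  ring

lemma closedBall_mul_eq_zero_of_lt_dist (h : IsSpectralResolution S P)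
    (h' : IsSpectralResolution S P') (hB : MeasurableSet B) {z : ℂ} {r : ℝ} (hr : 0 < r)
    (hdist : ∀ w ∈ B, 4 * r < dist z w) : P (Metric.closedBall z r) * P' B = 0 := by
  have hball (w : ℂ) : MeasurableSet (Metric.closedBall w r) := measurableSet_closedBall
  suffices P' B * P (Metric.closedBall z r) = 0 by
    simpa [(h.isPVM.isStarProjection _ (hball z)).isSelfAdjoint.star_eq,
      (h'.isPVM.isStarProjection _ hB).isSelfAdjoint.star_eq] using congrArg star this
  ext v
  refine h'.isPVM.apply_eq_zero_of_locally hB fun w hw =>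
    ⟨Metric.closedBall w r, Metric.closedBall_mem_nhds w hr, hball w, ?_⟩
  have hwz : 4 * r < dist w z := dist_comm z w ▸ hdist w hw
  exact congr($(h'.mul_eq_zero_of_lt_dist h (hball w) (hball z) hr.le subset_rfl subset_rfl hwz) v)

lemma apply_le_of_isClosed (h : IsSpectralResolution S P) (h' : IsSpectralResolution S P')
    {s : Set ℂ} (hs : IsClosed s) : P' s ≤ P s := by
  have hsm := hs.measurableSet
  rw [(h'.isPVM.isStarProjection s hsm).le_iff_mul_eq_right (h.isPVM.isStarProjection s hsm)]
  ext x
  refine h.isPVM.apply_eq_self_of_apply_compl_eq_zero h.univ hsm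
    (h.isPVM.apply_eq_zero_of_locally hsm.compl fun z hz => ?_)
  obtain ⟨ε, hε, hεs⟩ := Metric.isOpen_iff.1 hs.isOpen_compl z hz
  refine ⟨Metric.closedBall z (ε / 5), Metric.closedBall_mem_nhds z (by positivity),
    measurableSet_closedBall, ?_⟩
  have hdist (w : ℂ) (hw : w ∈ s) : 4 * (ε / 5) < dist z w := by
    have hεw : ε ≤ dist z w := by
      by_contra! hlt
      exact hεs (Metric.mem_ball'.2 hlt) hw
    linarith
  exact congr($(h.closedBall_mul_eq_zero_of_lt_dist h' hsm (by positivity) hdist) x)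

lemma unique (h : IsSpectralResolution S P) (h' : IsSpectralResolution S P')
    (hA : MeasurableSet A) : P A = P' A :=
  h.isPVM.apply_eq_of_le h'.isPVM (h.univ.trans h'.univ.symm)
    (fun _ hs => h.isPVM.apply_le_of_forall_isClosed h'.isPVM
      (fun _ ht => h'.apply_le_of_isClosed h ht) hs) hA

end IsSpectralResolution

end Uniqueness

section Conjugations

variable {K : Type*} [NormedAddCommGroup K] [InnerProductSpace ℂ K] {C : K → K}

namespace IsConjugation

lemma inner_apply_left (hC : IsConjugation C) (x y : K) : ⟪C x, y⟫_ℂ = conj ⟪x, C y⟫_ℂ := by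
  rw [← hC.inner_map, hC.invol]

lemma inner_apply_right (hC : IsConjugation C) (x y : K) : ⟪x, C y⟫_ℂ = conj ⟪C x, y⟫_ℂ := by
  rw [← hC.inner_map, hC.invol]

lemma norm_map (hC : IsConjugation C) (x : K) : ‖C x‖ = ‖x‖ := by
  rw [norm_eq_sqrt_re_inner (𝕜 := ℂ), norm_eq_sqrt_re_inner (𝕜 := ℂ) x, hC.inner_map,
    RCLike.conj_re]

/-- A conjugation as a conjugate-linear isometry. -/
def toLinearIsometry (hC : IsConjugation C) : K →ₗᵢ⋆[ℂ] K where
  toFun := C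
  map_add' := hC.map_add
  map_smul' := hC.map_smul
  norm_map' := hC.norm_map

lemma map_zero (hC : IsConjugation C) : C 0 = 0 := hC.toLinearIsometry.map_zero

lemma map_sub (hC : IsConjugation C) (x y : K) : C (x - y) = C x - C y :=
  _root_.map_sub hC.toLinearIsometry x y

/-- The bounded linear operator `C ∘ T ∘ C` obtained by conjugating `T` with `C`. -/
noncomputable def conjBy (hC : IsConjugation C) (T : K →L[ℂ] K) : K →L[ℂ] K :=
  hC.toLinearIsometry.toContinuousLinearMap.comp
    (T.comp hC.toLinearIsometry.toContinuousLinearMap)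

@[simp]
lemma conjBy_apply (hC : IsConjugation C) (T : K →L[ℂ] K) (x : K) :
    hC.conjBy T x = C (T (C x)) := rfl

variable [CompleteSpace K]

lemma isStarProjection_conjBy (hC : IsConjugation C) {T : K →L[ℂ] K} (hT : IsStarProjection T) :
    IsStarProjection (hC.conjBy T) where
  isIdempotentElem := by
    ext x
    simpa [hC.invol] using congr(C ($(hT.isIdempotentElem.eq) (C x)))
  isSelfAdjoint := by
    rw [ContinuousLinearMap.isSelfAdjoint_iff_isSymmetric]
    intro x y
    change ⟪C (T (C x)), y⟫_ℂ = ⟪x, C (T (C y))⟫_ℂ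
    rw [hC.inner_apply_left, hC.inner_apply_right x, hT.isSelfAdjoint.isSymmetric.apply_clm]

lemma isPVM_conjBy {X Y : Type*} [MeasurableSpace X] [MeasurableSpace Y] (hC : IsConjugation C)
    {P : Set X → K →L[ℂ] K} (hP : IsPVM P) {g : X → Y} (hg : Measurable g) :
    IsPVM fun A => hC.conjBy (P (g ⁻¹' A)) where
  isStarProjection A hA := hC.isStarProjection_conjBy (hP.isStarProjection _ (hg hA))
  hasSum_inner ξ η A hA hd := by
    simp only [conjBy_apply, hC.inner_apply_right, Complex.hasSum_conj', Set.preimage_iUnion]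
    exact hP.hasSum_inner (C ξ) (C η) _ (fun n => hg (hA n)) fun i j hij => (hd hij).preimage g

lemma diagMeasure_conjBy {X Y : Type*} [MeasurableSpace X] [MeasurableSpace Y]
    (hC : IsConjugation C) {P : Set X → K →L[ℂ] K} (hP : IsPVM P) {g : X → Y} (hg : Measurable g)
    (ξ : K) : (hC.isPVM_conjBy hP hg).diagMeasure ξ = (hP.diagMeasure (C ξ)).map g := by
  ext A hA
  rw [Measure.map_apply hg hA, IsPVM.diagMeasure_apply _ _ hA, hP.diagMeasure_apply _ (hg hA),
    hC.conjBy_apply, ← ofReal_norm, ← ofReal_norm, hC.norm_map]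

end IsConjugation

lemma specInt_map_conj {μ : K → Measure ℂ} (hC : IsConjugation C) (ξ η : K) :
    specInt (fun ζ => (μ (C ζ)).map conj) (fun z => z) ξ η =
      conj (specInt μ (fun z => z) (C ξ) (C η)) := by
  have hint (ν : Measure ℂ) : ∫ z, z ∂ν.map conj = conj (∫ z, z ∂ν) := by
    rw [integral_map Complex.continuous_conj.measurable.aemeasurable (by fun_prop), integral_conj]
  simp only [specInt, hint, hC.map_add, hC.map_sub, hC.map_smul, Complex.conj_I, neg_smul,
    sub_neg_eq_add, ← sub_eq_add_neg, map_mul, map_add, map_sub, map_inv₀,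
    map_ofNat]
  ring

namespace IsSpectralResolution

variable [CompleteSpace K] {S : K →ₗ.[ℂ] K} {P : Set ℂ → K →L[ℂ] K} {A : Set ℂ}

lemma conjBy (h : IsSpectralResolution S P) (hC : IsConjugation C)
    (hCdom : ∀ ξ : K, ξ ∈ S.domain ↔ C ξ ∈ S.domain)
    (hCS : ∀ (ξ : K) (h : ξ ∈ S.domain) (h' : C ξ ∈ S.domain), C (S ⟨C ξ, h'⟩) = S ⟨ξ, h⟩) :
    IsSpectralResolution S fun A => hC.conjBy (P (conj ⁻¹' A)) where
  isPVM := hC.isPVM_conjBy h.isPVM Complex.continuous_conj.measurable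
  univ := by
    ext x
    simp [h.univ, hC.invol]
  mem_domain_iff ξ := by
    have hdiag := hC.diagMeasure_conjBy h.isPVM Complex.continuous_conj.measurable
    rw [hCdom, h.mem_domain_iff, specDomain, specDomain, Set.mem_ofPred_eq, Set.mem_ofPred_eq,
      hdiag, lintegral_map (by fun_prop) Complex.continuous_conj.measurable]
    simp only [RCLike.nnnorm_conj]
  inner_apply ξ η := by
    have hdiag := funext (hC.diagMeasure_conjBy h.isPVM Complex.continuous_conj.measurable)
    have hform := h.inner_apply ⟨C ξ, (hCdom ξ).1 ξ.2⟩ ⟨C η, (hCdom η).1 η.2⟩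
    rw [hdiag, specInt_map_conj hC, ← hform, ← hC.inner_apply_right, hCS ξ ξ.2]

lemma apply_conj_preimage (h : IsSpectralResolution S P) (hC : IsConjugation C)
    (hCdom : ∀ ξ : K, ξ ∈ S.domain ↔ C ξ ∈ S.domain)
    (hCS : ∀ (ξ : K) (h : ξ ∈ S.domain) (h' : C ξ ∈ S.domain), C (S ⟨C ξ, h'⟩) = S ⟨ξ, h⟩)
    (hA : MeasurableSet A) (ξ : K) : C (P (conj ⁻¹' A) (C ξ)) = P A ξ :=
  congr($((h.conjBy hC hCdom hCS).unique h hA) ξ)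

end IsSpectralResolution

end Conjugations

section Domination

variable {K : Type*} [NormedAddCommGroup K] [InnerProductSpace ℂ K] [CompleteSpace K]
  {S : K →ₗ.[ℂ] K} {P F : Set ℂ → K →L[ℂ] K} {𝓑 : Set (Set ℂ)}

lemma IsSpectralResolution.apply_inter_preimage_le_of_local_solvability
    (h : IsSpectralResolution S P) (hF : IsPVMOn 𝓑 F)
    (hsolve : ∀ A ∈ 𝓑, ∀ z ∉ closure A, ∀ y, F A y = y → ∃ x : S.domain, z • (x : K) - S x = y)
    {M s : Set ℂ} {g : ℂ → ℂ} (hg : Continuous g) (hM : ∀ t, MeasurableSet t → M ∩ g ⁻¹' t ∈ 𝓑)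
    (hs : MeasurableSet s) : F (M ∩ g ⁻¹' s) ≤ P (g ⁻¹' s) := by
  refine (hF.isPVM_inter_preimage hM).apply_le_of_forall_isClosed (h.isPVM.map hg.measurable)
    (fun t ht => ?_) hs
  have hgt : IsClosed (g ⁻¹' t) := ht.preimage hg
  have hproj := hF.isStarProjection _ (hM t ht.measurableSet)
  rw [hproj.le_iff_mul_eq_right (h.isPVM.isStarProjection _ hgt.measurableSet)]
  ext y
  refine h.apply_eq_self_of_local_solvability hgt fun z hz => ?_
  have hz' : z ∉ closure (M ∩ g ⁻¹' t) :=
    fun hcl => hz (closure_minimal Set.inter_subset_right hgt hcl)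
  exact hsolve _ (hM t ht.measurableSet) z hz' _ congr($(hproj.isIdempotentElem.eq) y)

end Domination

section Folding

/-- The map folding the complex plane along the real axis onto the closed upper half-plane. -/
def foldIm (z : ℂ) : ℂ := ⟨z.re, |z.im|⟩

lemma continuous_foldIm : Continuous foldIm :=
  Complex.equivRealProdCLM.symm.continuous.comp
    (Complex.continuous_re.prodMk Complex.continuous_im.abs)

lemma foldIm_conj (z : ℂ) : foldIm (conj z) = foldIm z := by
  simp [foldIm]

lemma conj_preimage_foldIm_preimage (s : Set ℂ) : conj ⁻¹' (foldIm ⁻¹' s) = foldIm ⁻¹' s := by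
  ext z
  simp only [Set.mem_preimage, foldIm_conj]

lemma foldIm_eq_self_or_conj (z : ℂ) : foldIm z = z ∨ foldIm z = conj z := by
  rcases abs_choice z.im with h | h
  · exact .inl (Complex.ext rfl h)
  · exact .inr (Complex.ext rfl h)

lemma foldIm_preimage_inter_conj_preimage (A : Set ℂ) :
    foldIm ⁻¹' (A ∩ conj ⁻¹' A) = A ∩ conj ⁻¹' A := by
  ext z
  rcases foldIm_eq_self_or_conj z with h | h
  · simp only [Set.mem_preimage, h]
  · simp [h, and_comm]

end Folding

section SpectralMeasures

variable {K : Type*} [NormedAddCommGroup K] [InnerProductSpace ℂ K] [CompleteSpace K]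
  {S : K →ₗ.[ℂ] K} {C : K → K} {𝔖 A B : Set ℂ} {E : Set ℂ → K →L[ℂ] K} {μ : K → Measure ℂ}

namespace IsSpectralMeasure

lemma isPVMOn (hE : IsSpectralMeasure 𝔖 E μ) : IsPVMOn {A | MeasurableSet A ∧ A ⊆ 𝔖} E where
  isStarProjection A hA :=
    { isIdempotentElem :=
        (hE.inter A A hA.1 hA.1 hA.2 hA.2).symm.trans (congrArg E (Set.inter_self A))
      isSelfAdjoint := hE.selfAdjoint A hA.1 hA.2 }
  hasSum_inner ξ η A hA hd :=
    hE.countablyAdditive ξ η A (fun n => (hA n).1) (fun n => (hA n).2) hd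

lemma isPVM_inter (hE : IsSpectralMeasure 𝔖 E μ) (h𝔖 : MeasurableSet 𝔖) :
    IsPVM fun s => E (𝔖 ∩ s) :=
  hE.isPVMOn.isPVM_inter_preimage (g := id) fun _ hs => ⟨h𝔖.inter hs, Set.inter_subset_left⟩

lemma diagMeasure_isPVM_inter (hE : IsSpectralMeasure 𝔖 E μ) (h𝔖 : MeasurableSet 𝔖) :
    (hE.isPVM_inter h𝔖).diagMeasure = μ := by
  ext ξ s hs
  have hmem : MeasurableSet (𝔖 ∩ s) ∧ 𝔖 ∩ s ⊆ 𝔖 := ⟨h𝔖.inter hs, Set.inter_subset_left⟩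
  have hre : (⟪ξ, E (𝔖 ∩ s) ξ⟫_ℂ).re = ‖E (𝔖 ∩ s) ξ‖ ^ 2 :=
    re_inner_starProjection_apply (hE.isPVMOn.isStarProjection _ hmem) ξ
  rw [IsPVM.diagMeasure_apply _ _ hs, ← measure_inter_conull (hE.measure_compl ξ),
    Set.inter_comm s, hE.measure_eq ξ _ hmem.1 hmem.2, hre, ENNReal.ofReal_pow (norm_nonneg _),
    ofReal_norm]

lemma isSpectralResolution (hE : IsSpectralMeasure 𝔖 E μ) (h𝔖 : MeasurableSet 𝔖)
    (hdom : ∀ ξ : K, ξ ∈ S.domain ↔ ξ ∈ specDomain μ (fun z => z))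
    (hSE : ∀ ξ η : S.domain, ⟪(η : K), S ξ⟫_ℂ = specInt μ (fun z => z) ξ η) :
    IsSpectralResolution S fun s => E (𝔖 ∩ s) where
  isPVM := hE.isPVM_inter h𝔖
  univ := by rw [Set.inter_univ, hE.univ]
  mem_domain_iff := by rwa [hE.diagMeasure_isPVM_inter h𝔖]
  inner_apply := by rwa [hE.diagMeasure_isPVM_inter h𝔖]

lemma apply_sdiff_conj_preimage_eq_zero (hE : IsSpectralMeasure 𝔖 E μ) (h𝔖 : MeasurableSet 𝔖)
    (hC : IsConjugation C)
    (hsym : ∀ s, MeasurableSet s → ∀ ξ, C (E (𝔖 ∩ conj ⁻¹' s) (C ξ)) = E (𝔖 ∩ s) ξ)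
    (hA : A ∈ borE C 𝔖 E) : E (A \ conj ⁻¹' A) = 0 := by
  obtain ⟨hAm, hA𝔖, hAC⟩ := hA
  have hP := hE.isPVM_inter h𝔖
  have hA'm : MeasurableSet (conj ⁻¹' A) := Complex.continuous_conj.measurable hAm
  have hEA : E (𝔖 ∩ A) = E A := by rw [Set.inter_eq_self_of_subset_right hA𝔖]
  have hEA' : E (𝔖 ∩ conj ⁻¹' A) = E (𝔖 ∩ A) := by
    ext ξ
    have hsymξ := hsym A hAm (C ξ)
    rw [hC.invol, hEA] at hsymξ
    rw [hEA, ← hAC, ← hsymξ, hC.invol]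
  have hinter : E (𝔖 ∩ (A ∩ conj ⁻¹' A)) = E (𝔖 ∩ A) := by
    rw [hP.apply_inter hAm hA'm, hEA', (hP.isStarProjection A hAm).isIdempotentElem.eq]
  have hadd := hP.apply_inter_add_apply_sdiff hAm hA'm
  rw [hinter, add_eq_left] at hadd
  rwa [Set.inter_eq_self_of_subset_right (Set.sdiff_subset.trans hA𝔖)] at hadd

lemma sdiff_mem_borE (hE : IsSpectralMeasure 𝔖 E μ) (h𝔖 : MeasurableSet 𝔖)
    (hC : IsConjugation C) (hA : A ∈ borE C 𝔖 E) : 𝔖 \ A ∈ borE C 𝔖 E := by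
  obtain ⟨hAm, hA𝔖, hAC⟩ := hA
  refine ⟨h𝔖.diff hAm, Set.sdiff_subset, fun ξ => ?_⟩
  have hadd := hE.isPVMOn.apply_add_apply_sdiff ⟨.empty, Set.empty_subset _⟩ ⟨hAm, hA𝔖⟩
    ⟨h𝔖.diff hAm, Set.sdiff_subset⟩ hA𝔖
  rw [hE.univ, ← eq_sub_iff_add_eq'] at hadd
  simp [hadd, hC.map_sub, hC.invol, hAC]

end IsSpectralMeasure

lemma inter_foldIm_preimage_mem_borE (h𝔖 : MeasurableSet 𝔖)
    (hsym : ∀ s, MeasurableSet s → ∀ ξ, C (E (𝔖 ∩ conj ⁻¹' s) (C ξ)) = E (𝔖 ∩ s) ξ)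
    (hA : MeasurableSet A) : 𝔖 ∩ foldIm ⁻¹' A ∈ borE C 𝔖 E := by
  have hfold := continuous_foldIm.measurable hA
  refine ⟨h𝔖.inter hfold, Set.inter_subset_left, fun ξ => ?_⟩
  simpa only [conj_preimage_foldIm_preimage] using hsym _ hfold ξ

lemma IsSpectralMeasure.mem_borE_of_subset_of_apply_eq_zero (hE : IsSpectralMeasure 𝔖 E μ)
    (hC : IsConjugation C) (hA : MeasurableSet A) (hA𝔖 : A ⊆ 𝔖) (hEA : E A = 0)
    (hB : MeasurableSet B) (hBA : B ⊆ A) : B ∈ borE C 𝔖 E := by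
  have hEB : E B = 0 := by
    rw [← Set.inter_eq_self_of_subset_left hBA, hE.inter B A hB hA (hBA.trans hA𝔖) hA𝔖, hEA,
      ContinuousLinearMap.comp_zero]
  exact ⟨hB, hBA.trans hA𝔖, fun ξ => by simp [hEB, hC.map_zero]⟩

lemma IsSpectralMeasure.apply_le_of_local_solvability (hE : IsSpectralMeasure 𝔖 E μ)
    (h𝔖 : MeasurableSet 𝔖) (hC : IsConjugation C)
    (hsym : ∀ s, MeasurableSet s → ∀ ξ, C (E (𝔖 ∩ conj ⁻¹' s) (C ξ)) = E (𝔖 ∩ s) ξ)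
    (h : IsSpectralResolution S fun s => E (𝔖 ∩ s)) {F : Set ℂ → K →L[ℂ] K}
    (hF : IsPVMOn (borE C 𝔖 E) F)
    (hsolve : ∀ A ∈ borE C 𝔖 E, ∀ z ∉ closure A, ∀ y, F A y = y →
      ∃ x : S.domain, z • (x : K) - S x = y) (hA : A ∈ borE C 𝔖 E) : F A ≤ E A := by
  obtain ⟨hAm, hA𝔖, -⟩ := id hA
  have hA'm : MeasurableSet (conj ⁻¹' A) := Complex.continuous_conj.measurable hAm
  have hNm := hAm.diff hA'm
  have hN𝔖 : A \ conj ⁻¹' A ⊆ 𝔖 := Set.sdiff_subset.trans hA𝔖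
  have hnull {t : Set ℂ} (ht : MeasurableSet t) (htN : t ⊆ A \ conj ⁻¹' A) : t ∈ borE C 𝔖 E :=
    hE.mem_borE_of_subset_of_apply_eq_zero hC hNm hN𝔖
      (hE.apply_sdiff_conj_preimage_eq_zero h𝔖 hC hsym hA) ht htN
  have hfold (t : Set ℂ) (ht : MeasurableSet t) := inter_foldIm_preimage_mem_borE h𝔖 hsym ht
  have hsymm := h.apply_inter_preimage_le_of_local_solvability hF hsolve continuous_foldIm hfold
    (hAm.inter hA'm)
  have hsymm_mem := hfold _ (hAm.inter hA'm)
  have hrest := h.apply_inter_preimage_le_of_local_solvability hF hsolve continuous_id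
    (fun t ht => hnull (hNm.inter ht) Set.inter_subset_left) hNm
  simp only [foldIm_preimage_inter_conj_preimage, Set.preimage_id, Set.inter_self,
    Set.inter_eq_self_of_subset_right hN𝔖,
    Set.inter_eq_self_of_subset_right (Set.inter_subset_left.trans hA𝔖)] at hsymm hsymm_mem hrest
  have hdisj : Disjoint (A ∩ conj ⁻¹' A) (A \ conj ⁻¹' A) := Set.disjoint_sdiff_inter.symm
  rw [← Set.inter_union_sdiff A (conj ⁻¹' A),
    hF.apply_union (hnull .empty (Set.empty_subset _)) hsymm_mem (hnull hNm subset_rfl) hdisj,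
    hE.isPVMOn.apply_union ⟨.empty, Set.empty_subset _⟩ ⟨hAm.inter hA'm, hsymm_mem.2.1⟩
      ⟨hNm, hN𝔖⟩ hdisj]
  exact add_le_add hsymm hrest

end SpectralMeasures

section Resolvents

variable {K : Type*} [NormedAddCommGroup K] [InnerProductSpace ℂ K]

-- The resolvent at `w` is `R * (1 + (w - z) • R)⁻¹`, where `R` is the resolvent at `z`.
lemma hasBoundedResolventAt_of_isUnit {S : K →ₗ.[ℂ] K} {z w : ℂ} {R : K →L[ℂ] K}
    (hright : ∀ ξ : K, ∃ h : R ξ ∈ S.domain, z • R ξ - S ⟨R ξ, h⟩ = ξ)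
    (hleft : ∀ ξ : S.domain, R (z • (ξ : K) - S ξ) = ξ) (hu : IsUnit (1 + (w - z) • R)) :
    HasBoundedResolventAt S w := by
  obtain ⟨u, hu⟩ := hu
  let V : K →L[ℂ] K := u⁻¹.val
  have happly (ξ : K) : u.val ξ = ξ + (w - z) • R ξ := by simp [hu]
  have hcomm : Commute R V := by
    refine Commute.units_inv_right ?_
    rw [hu]
    exact (Commute.one_right R).add_right ((Commute.refl R).smul_right _)
  refine ⟨R * V, fun ξ => ?_, fun ξ => ?_⟩
  · obtain ⟨hmem, hsolve⟩ := hright (V ξ)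
    refine ⟨hmem, ?_⟩
    calc w • R (V ξ) - S ⟨R (V ξ), hmem⟩
        = (z • R (V ξ) - S ⟨R (V ξ), hmem⟩) + (w - z) • R (V ξ) := by module
      _ = u.val (V ξ) := by rw [hsolve, happly]
      _ = ξ := congr($(u.mul_inv) ξ)
  · have hshift : w • (ξ : K) - S ξ = (z • (ξ : K) - S ξ) + (w - z) • (ξ : K) := by module
    calc (R * V) (w • (ξ : K) - S ξ) = V (R (w • (ξ : K) - S ξ)) := congr($(hcomm.eq) _)
      _ = V (u.val ξ) := by rw [hshift, map_add, hleft, map_smul, happly]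
      _ = ξ := congr($(u.inv_mul) ξ.val)

lemma isClosed_pmapSpectrum [CompleteSpace K] (S : K →ₗ.[ℂ] K) : IsClosed (pmapSpectrum S) := by
  rw [← isOpen_compl_iff, isOpen_iff_eventually]
  intro z hz
  obtain ⟨R, hright, hleft⟩ := not_not.1 hz
  have hcont : Continuous fun w : ℂ => 1 + (w - z) • R := by fun_prop
  have hunit : IsUnit (1 + (z - z) • R) := by simp
  filter_upwards [hcont.continuousAt.eventually (Units.isOpen.mem_nhds hunit)] with w hw
  exact not_not.2 (hasBoundedResolventAt_of_isUnit hright hleft hw)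

end Resolvents

theorem spectralMeasure_uniqueness_unbounded_general
    {K : Type*} [NormedAddCommGroup K] [InnerProductSpace ℂ K] [CompleteSpace K]
    {C : K → K} (hC : IsConjugation C) (S : K →ₗ.[ℂ] K)
    (hCdom : ∀ ξ : K, ξ ∈ S.domain ↔ C ξ ∈ S.domain)
    (hCS : ∀ (ξ : K) (h : ξ ∈ S.domain) (h' : C ξ ∈ S.domain),
      C (S ⟨C ξ, h'⟩) = S ⟨ξ, h⟩)
    {𝔖 : Set ℂ} (h𝔖 : MeasurableSet 𝔖) (E : Set ℂ → K →L[ℂ] K) (μ : K → Measure ℂ)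
    (hE : IsSpectralMeasure 𝔖 E μ)
    (hdom : ∀ ξ : K, ξ ∈ S.domain ↔ ξ ∈ specDomain μ (fun z => z))
    (hSE : ∀ ξ η : S.domain, ⟪(η : K), S ξ⟫_ℂ = specInt μ (fun z => z) ξ η)
    (F : Set ℂ → K →L[ℂ] K)
    (hFsa : ∀ A ∈ borE C 𝔖 E, IsSelfAdjoint (F A))
    (hFidem : ∀ A ∈ borE C 𝔖 E, F A ∘L F A = F A)
    (hFuniv : F 𝔖 = 1)
    (hFadd : ∀ (ξ η : K) (A : ℕ → Set ℂ), (∀ n, A n ∈ borE C 𝔖 E) →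
      Pairwise (Function.onFun Disjoint A) →
      HasSum (fun n => ⟪η, F (A n) ξ⟫_ℂ) ⟪η, F (⋃ n, A n) ξ⟫_ℂ)
    (hFsolve : ∀ A ∈ borE C 𝔖 E, ∀ z₀ ∉ closure A, ∀ y, F A y = y →
      ∃ x : S.domain, z₀ • (x : K) - S x = y) :
    ∀ A ∈ borE C 𝔖 E, F A = E A := by
  have h := hE.isSpectralResolution h𝔖 hdom hSE
  have hsym (s : Set ℂ) (hs : MeasurableSet s) (ξ : K) :
      C (E (𝔖 ∩ conj ⁻¹' s) (C ξ)) = E (𝔖 ∩ s) ξ := h.apply_conj_preimage hC hCdom hCS hs ξ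
  have hF : IsPVMOn (borE C 𝔖 E) F := ⟨fun A hA => ⟨hFidem A hA, hFsa A hA⟩, hFadd⟩
  have hle {A : Set ℂ} (hA : A ∈ borE C 𝔖 E) : F A ≤ E A :=
    hE.apply_le_of_local_solvability h𝔖 hC hsym h hF hFsolve hA
  intro A hA
  have hcompl := hE.sdiff_mem_borE h𝔖 hC hA
  have hempty : ∅ ∈ borE C 𝔖 E := ⟨.empty, Set.empty_subset _, by simp [hE.empty, hC.map_zero]⟩
  refine ((add_eq_add_iff_eq_and_eq (hle hA) (hle hcompl)).1 ?_).1
  rw [hF.apply_add_apply_sdiff hempty hA hcompl hA.2.1, hFuniv,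
    hE.isPVMOn.apply_add_apply_sdiff ⟨.empty, Set.empty_subset _⟩ ⟨hA.1, hA.2.1⟩
      ⟨hcompl.1, hcompl.2.1⟩ hA.2.1, hE.univ]

/-- **uniqueness of the real spectral measure, unbounded case.**
Let `C` be a conjugation on `K` and `S` a closed densely defined normal operator commuting
with `C`; let `E` (with diagonal scalar measures `μ`) be the spectral measure of `S` on
`𝔖 = σ(S)`.  If `F` is a map on `Bor_E(𝔖)` whose values are self-adjoint idempotents
commuting with `C`, with `F(∅) = 0`, `F(𝔖) = I`, `F(A ∩ B) = F(A)F(B)`, weakly countably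
additive, such that `S(F(A)K ∩ D(S)) ⊆ F(A)K` and the restriction of `S` to `F(A)K` (with
domain `F(A)K ∩ D(S)`) has spectrum contained in `closure A`, then `F = E` on `Bor_E(𝔖)`. -/
theorem spectralMeasure_uniqueness_unbounded
    {K : Type*} [NormedAddCommGroup K] [InnerProductSpace ℂ K] [CompleteSpace K]
    {C : K → K} (hC : IsConjugation C) (S : K →ₗ.[ℂ] K) (hS : IsNormalPMap S)
    (hCdom : ∀ ξ : K, ξ ∈ S.domain ↔ C ξ ∈ S.domain)
    (hCS : ∀ (ξ : K) (h : ξ ∈ S.domain) (h' : C ξ ∈ S.domain),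
      C (S ⟨C ξ, h'⟩) = S ⟨ξ, h⟩)
    (E : Set ℂ → K →L[ℂ] K) (μ : K → Measure ℂ)
    (hE : IsSpectralMeasure (pmapSpectrum S) E μ)
    (hdom : ∀ ξ : K, ξ ∈ S.domain ↔ ξ ∈ specDomain μ (fun z => z))
    (hSE : ∀ ξ η : S.domain, ⟪(η : K), S ξ⟫_ℂ = specInt μ (fun z => z) ξ η)
    (F : Set ℂ → K →L[ℂ] K)
    (hFsa : ∀ A ∈ borE C (pmapSpectrum S) E, IsSelfAdjoint (F A))
    (hFidem : ∀ A ∈ borE C (pmapSpectrum S) E, F A ∘L F A = F A)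
    (hFflat : ∀ A ∈ borE C (pmapSpectrum S) E, ∀ ξ : K, C (F A (C ξ)) = F A ξ)
    (hFempty : F ∅ = 0) (hFuniv : F (pmapSpectrum S) = 1)
    (hFinter : ∀ A ∈ borE C (pmapSpectrum S) E, ∀ B ∈ borE C (pmapSpectrum S) E,
      F (A ∩ B) = F A ∘L F B)
    (hFadd : ∀ (ξ η : K) (A : ℕ → Set ℂ), (∀ n, A n ∈ borE C (pmapSpectrum S) E) →
      Pairwise (Function.onFun Disjoint A) →
      HasSum (fun n => ⟪η, F (A n) ξ⟫_ℂ) ⟪η, F (⋃ n, A n) ξ⟫_ℂ)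
    (hFSinv : ∀ A ∈ borE C (pmapSpectrum S) E, ∀ (x : K) (hx : x ∈ S.domain),
      F A x = x → F A (S ⟨x, hx⟩) = S ⟨x, hx⟩)
    (hFspec : ∀ A ∈ borE C (pmapSpectrum S) E, ∀ z₀ : ℂ, z₀ ∉ closure A →
      ∀ y : K, F A y = y →
        ∃! x : S.domain, F A (x : K) = (x : K) ∧ z₀ • (x : K) - S x = y) :
    ∀ A ∈ borE C (pmapSpectrum S) E, F A = E A := by
  exact spectralMeasure_uniqueness_unbounded_general hC S hCdom hCS
    (isClosed_pmapSpectrum S).measurableSet E μ hE hdom hSE F hFsa hFidem hFuniv hFadd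
    fun A hA z hz y hy => (hFspec A hA z hz y hy).exists.imp fun _ h => h.2
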